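/- Let K ≥ 2, let p : Fin K → ℝ satisfy p_k ≥ 0 for all k and Σ_{k=1}^K p_k = 1, let q = max(1/2, max_{1≤k≤K} p_k), and assume q < 1. Let γ be a real number with γ ≥ 2q, and define a : Fin K → ℝ by a_k = 2(1−q)/γ if p_k = q and a_k = 2q/γ otherwise. Then S_w = Σ_{k=1}^K a_k p_k > 0 and the (K−1)×(K−1) matrix γ·S(a) − S_full is positive semidefinite. -/

import Mathlib

open Finset

/-- The index embedding from the first `K - 1` classes into all `K` classes. -/
def classEmb (K : ℕ) : Fin (K - 1) → Fin K := Fin.castLE (Nat.sub_le K 1)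

/-- The subsampling information matrix `S(a)` with weights `w k = a k * p k`:
entries `δ_{ij} w_i - w_i w_j / S_w`. -/
noncomputable def subMat (K : ℕ) (w : Fin K → ℝ) : Matrix (Fin (K - 1)) (Fin (K - 1)) ℝ :=
  Matrix.of fun i j =>
    (if i = j then w (classEmb K i) else 0) -
      w (classEmb K i) * w (classEmb K j) / ∑ k, w k

/-- The full-data information matrix `S_full` with entries `δ_{ij} p_i - p_i p_j`. -/
def fullMat (K : ℕ) (p : Fin K → ℝ) : Matrix (Fin (K - 1)) (Fin (K - 1)) ℝ :=
  Matrix.of fun i j =>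
    (if i = j then p (classEmb K i) else 0) - p (classEmb K i) * p (classEmb K j)

theorem subMat_quad (n : ℕ) (w : Fin (n + 1) → ℝ) (x : Fin n → ℝ) :
    x ⬝ᵥ (Matrix.mulVec (subMat (n + 1) w) x) =
      ∑ k, w k * (Fin.snoc x 0 : Fin (n + 1) → ℝ) k ^ 2 -
        (∑ k, w k * (Fin.snoc x 0 : Fin (n + 1) → ℝ) k) ^ 2 / ∑ k, w k := by
  have e : ∀ i : Fin n, classEmb (n + 1) i = Fin.castSucc i := fun i => rfl
  have h1 : ∑ k, w k * (Fin.snoc x 0 : Fin (n + 1) → ℝ) k ^ 2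
      = ∑ i : Fin n, w i.castSucc * x i ^ 2 := by
    rw [Fin.sum_univ_castSucc]; simp
  have h2 : ∑ k, w k * (Fin.snoc x 0 : Fin (n + 1) → ℝ) k
      = ∑ i : Fin n, w i.castSucc * x i := by
    rw [Fin.sum_univ_castSucc]; simp
  rw [h1, h2]
  generalize hS : ∑ k, w k = S
  have h3 : ∀ i : Fin n, Matrix.mulVec (subMat (n + 1) w) x i =
      w i.castSucc * x i - w i.castSucc / S * ∑ j : Fin n, w j.castSucc * x j := by
    intro i
    have : Matrix.mulVec (subMat (n + 1) w) x i = ∑ j : Fin n,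
      ((if i = j then w i.castSucc else 0) - w i.castSucc * w j.castSucc / S) * x j := by
      rw [← hS]; rfl
    rw [this]
    simp only [sub_mul, Finset.sum_sub_distrib, ite_mul, zero_mul, Finset.sum_ite_eq,
      Finset.mem_univ, if_true, Finset.mul_sum]
    congr 1
    exact Finset.sum_congr rfl fun j _ => by ring
  have h4 : x ⬝ᵥ (Matrix.mulVec (subMat (n + 1) w) x) =
      ∑ i : Fin n, x i * Matrix.mulVec (subMat (n + 1) w) x i := rfl
  rw [h4]
  simp only [h3]
  generalize hU : ∑ j : Fin n, w j.castSucc * x j = U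
  have h5 : ∀ i : Fin n, x i * (w i.castSucc * x i - w i.castSucc / S * U) =
      w i.castSucc * x i ^ 2 - (w i.castSucc * x i) * (U / S) := fun i => by ring
  simp only [h5, Finset.sum_sub_distrib, ← Finset.sum_mul, hU]
  ring

theorem fullMat_eq (K : ℕ) (p : Fin K → ℝ) (hp1 : ∑ k, p k = 1) :
    fullMat K p = subMat K p := by
  simp [fullMat, subMat, hp1]

theorem subMat_symm (K : ℕ) (w : Fin K → ℝ) : (subMat K w).IsHermitian := by
  ext i j
  simp only [subMat, Matrix.conjTranspose_apply, Matrix.of_apply, star_trivial]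
  by_cases h : i = j
  · subst h; rfl
  · simp [h, Ne.symm h, mul_comm]

theorem smul_subMat (K : ℕ) (w : Fin K → ℝ) (γ : ℝ) (hγ : γ ≠ 0) :
    γ • subMat K w = subMat K (fun k => γ * w k) := by
  ext i j
  simp only [subMat, Matrix.smul_apply, Matrix.of_apply, smul_eq_mul, ← Finset.mul_sum]
  split_ifs <;> by_cases hS : ∑ k, w k = 0
  · simp [hS]
  · field_simp
  · simp [hS]
  · field_simp
    ring

theorem core_ineq (K : ℕ) (p v X : Fin K → ℝ) (hp0 : ∀ k, 0 ≤ p k) (hp1 : ∑ k, p k = 1)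
    (q : ℝ) (hq : 1 / 2 < q) (hq1 : q < 1) (m : Fin K) (hm : p m = q)
    (hvm : v m = 2 * (1 - q) * q) (hv : ∀ k, k ≠ m → v k = 2 * q * p k) :
    ∑ k, v k = 4 * q * (1 - q) ∧
    ∑ k, p k * X k ^ 2 - (∑ k, p k * X k) ^ 2 / ∑ k, p k ≤
    ∑ k, v k * X k ^ 2 - (∑ k, v k * X k) ^ 2 / ∑ k, v k := by
  have sp : ∀ f : Fin K → ℝ, ∑ k, f k = f m + ∑ k ∈ univ.erase m, f k := fun f =>
    (Finset.add_sum_erase _ f (mem_univ m)).symm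
  have hr : ∑ k ∈ univ.erase m, p k = 1 - q := by
    have := sp p; rw [hp1, hm] at this; linarith
  have hvs : ∀ f : Fin K → ℝ, ∑ k ∈ univ.erase m, v k * f k
      = 2 * q * ∑ k ∈ univ.erase m, p k * f k := fun f => by
    rw [Finset.mul_sum]
    refine Finset.sum_congr rfl fun k hk => ?_
    rw [hv k (Finset.ne_of_mem_erase hk)]; ring
  have hS : ∑ k, v k = 4 * q * (1 - q) := by
    have := hvs (fun _ => 1)
    simp only [mul_one] at this
    rw [sp v, this, hr, hvm]; ring
  refine ⟨hS, ?_⟩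
  have hC : (∑ k ∈ univ.erase m, p k * X k) ^ 2 ≤
      (∑ k ∈ univ.erase m, p k) * ∑ k ∈ univ.erase m, p k * X k ^ 2 :=
    Finset.sum_sq_le_sum_mul_sum_of_sq_le_mul _ (fun k _ => hp0 k)
      (fun k _ => mul_nonneg (hp0 k) (sq_nonneg _)) (fun k _ => le_of_eq (by ring))
  rw [hS, hp1, sp (fun k => p k * X k ^ 2), sp (fun k => p k * X k),
    sp (fun k => v k * X k ^ 2), sp (fun k => v k * X k), hvs X, hvs (fun k => X k ^ 2), hm, hvm]
  rw [hr] at hC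
  generalize (∑ k ∈ univ.erase m, p k * X k) = U at *
  generalize (∑ k ∈ univ.erase m, p k * X k ^ 2) = T at *
  have hr0 : 0 < 1 - q := by linarith
  have hq0 : 0 < q := by linarith
  have hT : 0 ≤ T - U ^ 2 / (1 - q) := by
    rw [sub_nonneg, div_le_iff₀ hr0]; linarith
  have := mul_nonneg (by linarith : 0 ≤ 2 * q - 1) hT
  rw [← sub_nonneg]
  refine this.trans_eq ?_
  have hrn : 1 - q ≠ 0 := hr0.ne'
  field_simp
  ring

theorem lus_psd_large_gamma
    (K : ℕ) (hK : 2 ≤ K) (p : Fin K → ℝ)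
    (hp0 : ∀ k, 0 ≤ p k) (hp1 : ∑ k, p k = 1)
    (q : ℝ) (hq : q = max (1 / 2) (⨆ k, p k)) (hq1 : q < 1)
    (γ : ℝ) (hγ : 2 * q ≤ γ) (a : Fin K → ℝ)
    (ha : ∀ k, a k = if p k = q then 2 * (1 - q) / γ else 2 * q / γ) :
    0 < ∑ k, a k * p k ∧
    (γ • subMat K (fun k => a k * p k) - fullMat K p).PosSemidef := by
  have hq2 : 1 / 2 ≤ q := hq ▸ le_max_left _ _
  have hγ0 : 0 < γ := by linarith
  obtain ⟨n, rfl⟩ : ∃ n, K = n + 1 := ⟨K - 1, by omega⟩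
  have hSmul : ∑ k, γ * (a k * p k) = γ * ∑ k, a k * p k := by rw [Finset.mul_sum]
  have hb : ∀ k, γ * (a k * p k) = (if p k = q then 2 * (1 - q) else 2 * q) * p k := by
    intro k
    rw [ha k]
    split_ifs <;> field_simp
  rw [smul_subMat _ _ _ hγ0.ne', fullMat_eq _ _ hp1]
  rcases hq2.eq_or_lt with h | h
  · have hv : (fun k => γ * (a k * p k)) = p := by
      funext k
      rw [hb k, ← h]
      split_ifs <;> ring
    have hs : γ * ∑ k, a k * p k = 1 := by
      rw [← hSmul, ← hp1]
      exact congrArg (fun f : Fin (n + 1) → ℝ => ∑ k, f k) hv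
    refine ⟨?_, ?_⟩
    · exact pos_of_mul_pos_right (by rw [hs]; norm_num) hγ0.le
    · rw [hv, sub_self]; exact Matrix.PosSemidef.zero
  · obtain ⟨m, hm⟩ := exists_eq_ciSup_of_finite (f := p)
    have hmq : p m = q := by
      rw [hm]
      rcases max_choice (1 / 2) (⨆ k, p k) with h' | h'
      · rw [h'] at hq; linarith
      · rw [h'] at hq; exact hq.symm
    have hne : ∀ k, k ≠ m → p k ≠ q := by
      intro k hk hkq
      have := Finset.add_le_sum (s := univ) (f := p) (fun i _ => hp0 i) (mem_univ k) (mem_univ m) hk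
      rw [hp1] at this
      linarith
    have key := fun X => core_ineq (n + 1) p (fun k => γ * (a k * p k)) X hp0 hp1 q h hq1 m hmq
      (by rw [hb, if_pos hmq, hmq]) (fun k hk => by simp only [hb, hne k hk, if_false])
    refine ⟨?_, ?_⟩
    · have h1 := (key 0).1
      rw [hSmul] at h1
      refine pos_of_mul_pos_right ?_ hγ0.le
      rw [h1]
      exact mul_pos (by linarith) (by linarith)
    · refine Matrix.PosSemidef.of_dotProduct_mulVec_nonneg
        ((subMat_symm _ _).sub (subMat_symm _ _)) fun x => ?_
      rw [star_trivial, Matrix.sub_mulVec, dotProduct_sub, sub_nonneg]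
      have h2 := (key (Fin.snoc x 0 : Fin (n + 1) → ℝ)).2
      have e1 := subMat_quad n p x
      have e2 := subMat_quad n (fun k => γ * (a k * p k)) x
      rw [← e1, ← e2] at h2
      exact h2
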